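/- arXiv:2605.30813 — 4 statements merged into one kernel-verified Lean document; each statement's English description precedes it below -/
import Mathlib

section
/- Prefix Consistency: let D be a dictionary over a finite alphabet Σ and s a string, and let φ = 𝕋_D(s). Then for every prefix μ of the token list φ, one has 𝕋_D(π(μ)) = μ; that is, every prefix of the BPE tokenization of s is exactly the BPE tokenization of the corresponding prefix of s. -/
/-!
Common BPE formalization preamble.

A token is a (nonempty) string over the alphabet `α`, modeled as `List α`.
A merge rule is a pair of tokens; a dictionary is an ordered list of rules
(earlier rules have strictly higher priority).
-/

namespace BPE

variable {α : Type*} [DecidableEq α]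

/-- A token is a string over the alphabet (nonemptiness is imposed by hypotheses). -/
abbrev Token (α : Type*) := List α

/-- A merge rule is an ordered pair of tokens. -/
abbrev Rule (α : Type*) := Token α × Token α

/-- A dictionary is an ordered list of merge rules; earlier = higher priority. -/
abbrev Dict (α : Type*) := List (Rule α)

/-- Apply a single merge rule to a token list, scanning left to right and replacing
each adjacent occurrence of `r.1` followed by `r.2` by the concatenated token,
resuming the scan after the newly formed token (no overlaps). -/
def applyRule (r : Rule α) : List (Token α) → List (Token α)
  | [] => []
  | [t] => [t]
  | t :: u :: rest =>
      if t = r.1 ∧ u = r.2 then (r.1 ++ r.2) :: applyRule r rest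
      else t :: applyRule r (u :: rest)

/-- `φ₀(s)`: the list of single-character tokens of `s`. -/
def phi0 (s : List α) : List (Token α) := s.map (fun c => [c])

/-- `φ_k(s)`: the token list after applying the first `k` rules of `D` to `s`. -/
def phiK (D : Dict α) (k : ℕ) (s : List α) : List (Token α) :=
  (D.take k).foldl (fun φ r => applyRule r φ) (phi0 s)

/-- The BPE tokenization `𝕋_D(s)`. -/
def tokenize (D : Dict α) (s : List α) : List (Token α) :=
  phiK D D.length s

/-- Detokenization `π`: concatenation of the tokens. -/
def detok (φ : List (Token α)) : List α := φ.flatten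

/-- A dictionary is valid if all rule components are genuine (nonempty) tokens. -/
def ValidDict (D : Dict α) : Prop := ∀ r ∈ D, r.1 ≠ [] ∧ r.2 ≠ []

/-- A token `t` is canonical if `𝕋_D(t) = [t]`. -/
def IsCanonical (D : Dict α) (t : Token α) : Prop := tokenize D t = [t]

/-- The last token `θ(s)`: last element of `𝕋_D(s)` (defaulting to `[]`). -/
def theta (D : Dict α) (s : List α) : Token α := (tokenize D s).getLastD []

/-- `j` (0-based) is the index of the canonical rule of `t`:
`φ_j(t)` has exactly two tokens and `φ_{j+1}(t) = [t]`. -/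
def IsCanonicalRuleIdx (D : Dict α) (t : Token α) (j : ℕ) : Prop :=
  j < D.length ∧ (phiK D j t).length = 2 ∧ phiK D (j + 1) t = [t]

open Classical in
/-- The (0-based) index of the canonical rule of `t` (junk value `0` if none exists). -/
noncomputable def canonIdx (D : Dict α) (t : Token α) : ℕ :=
  if h : ∃ j, IsCanonicalRuleIdx D t j then h.choose else 0

/-- Predecessor `pre(t)`: first token of the two-token stage `φ_{j-1}(t)`. -/
noncomputable def pre (D : Dict α) (t : Token α) : Token α :=
  (phiK D (canonIdx D t) t).headD []

/-- Successor `suc(t)`: second token of the two-token stage `φ_{j-1}(t)`. -/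
noncomputable def suc (D : Dict α) (t : Token α) : Token α :=
  (phiK D (canonIdx D t) t).getLastD []

/-- `InPath D x a` means `a ∈ P(x)`: `a` is obtained from `x` by iterating `suc`,
i.e. `a` lies on the ancestor path of `x` in the Successor Forest. -/
def InPath (D : Dict α) (x a : Token α) : Prop :=
  ∃ n : ℕ, (suc D)^[n] x = a

/-- `s` with the suffix `u` removed. -/
def dropSuffix (s u : List α) : List α := s.take (s.length - u.length)

/-- The Prefix Last-Token Condition of the canonical suffix token `t`
with respect to the string `s`. Atomic tokens satisfy it by definition;
a non-atomic token must satisfy Reachability and Priority dominance. -/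
def PLTC (D : Dict α) (s t : Token α) : Prop :=
  t.length = 1 ∨
    (1 < t.length ∧
      InPath D (theta D (dropSuffix s (suc D t))) (pre D t) ∧
      (theta D (dropSuffix s (suc D t)) ≠ pre D t →
        ∀ u : Token α, 1 < u.length → IsCanonical D u → suc D u = pre D t →
          InPath D (theta D (dropSuffix s (suc D t))) u →
          canonIdx D t < canonIdx D u))


theorem applyRule_prefix (r : Rule α) (L : List (Token α)) :
    ∀ μ, μ <+: applyRule r L → ∃ ν, ν <+: L ∧ applyRule r ν = μ := by
  induction L using applyRule.induct r with
  | case1 =>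
    intro μ h
    simp only [applyRule, List.prefix_nil] at h
    exact ⟨[], List.prefix_rfl, by simp [applyRule, h]⟩
  | case2 t =>
    intro μ h
    simp only [applyRule] at h
    cases μ with
    | nil => exact ⟨[], List.nil_prefix, by simp [applyRule]⟩
    | cons a μ =>
      rw [List.cons_prefix_cons] at h
      obtain ⟨rfl, h⟩ := h
      obtain rfl := List.prefix_nil.1 h
      exact ⟨[a], List.prefix_rfl, by simp [applyRule]⟩
  | case3 t u rest hc ih =>
    intro μ h
    rw [applyRule, if_pos hc] at h
    cases μ with
    | nil => exact ⟨[], List.nil_prefix, by simp [applyRule]⟩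
    | cons a μ =>
      rw [List.cons_prefix_cons] at h
      obtain ⟨rfl, h⟩ := h
      obtain ⟨ν, hν, rfl⟩ := ih μ h
      refine ⟨t :: u :: ν, by simpa [List.cons_prefix_cons] using hν, ?_⟩
      rw [applyRule, if_pos hc]
  | case4 t u rest hc ih =>
    intro μ h
    rw [applyRule, if_neg hc] at h
    cases μ with
    | nil => exact ⟨[], List.nil_prefix, by simp [applyRule]⟩
    | cons a μ =>
      rw [List.cons_prefix_cons] at h
      obtain ⟨rfl, h⟩ := h
      obtain ⟨ν, hν, rfl⟩ := ih μ h
      refine ⟨a :: ν, by simpa [List.cons_prefix_cons] using hν, ?_⟩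
      cases ν with
      | nil => simp [applyRule]
      | cons b ν =>
        rw [List.cons_prefix_cons] at hν
        obtain ⟨rfl, hν⟩ := hν
        rw [applyRule, if_neg hc]

theorem applyRule_flatten (r : Rule α) (L : List (Token α)) :
    (applyRule r L).flatten = L.flatten := by
  induction L using applyRule.induct r with
  | case1 => simp [applyRule]
  | case2 t => simp [applyRule]
  | case3 t u rest hc ih =>
    rw [applyRule, if_pos hc]
    simp [ih, hc.1, hc.2]
  | case4 t u rest hc ih =>
    rw [applyRule, if_neg hc]
    simp [ih]

theorem foldl_prefix (D : Dict α) : ∀ (L μ : List (Token α)),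
    μ <+: D.foldl (fun φ r => applyRule r φ) L →
    ∃ ν, ν <+: L ∧ D.foldl (fun φ r => applyRule r φ) ν = μ := by
  induction D with
  | nil => intro L μ h; exact ⟨μ, h, rfl⟩
  | cons r D ih =>
    intro L μ h
    obtain ⟨ν, hν, rfl⟩ := ih _ _ h
    obtain ⟨κ, hκ, rfl⟩ := applyRule_prefix r L ν hν
    exact ⟨κ, hκ, rfl⟩

theorem foldl_flatten (D : Dict α) : ∀ (L : List (Token α)),
    (D.foldl (fun φ r => applyRule r φ) L).flatten = L.flatten := by
  induction D with
  | nil => intro L; rfl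
  | cons r D ih =>
    intro L
    rw [List.foldl_cons, ih, applyRule_flatten]

theorem phi0_flatten (s : List α) : (phi0 s).flatten = s := by
  induction s with
  | nil => rfl
  | cons a s ih => simpa [phi0] using ih

/-- **Prefix Consistency.** Every prefix `μ` of the BPE tokenization `𝕋_D(s)`
is exactly the BPE tokenization of the corresponding prefix `π(μ)` of `s`. -/
theorem prefix_consistency [Fintype α] (D : Dict α) (hD : ValidDict D)
    (s : List α) (μ : List (Token α)) (hμ : μ <+: tokenize D s) :
    tokenize D (detok μ) = μ := by
  unfold tokenize phiK at *
  rw [List.take_length] at *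
  obtain ⟨ν, hν, rfl⟩ := foldl_prefix D _ _ hμ
  have h : ν = phi0 (s.take ν.length) := by
    rw [phi0, List.map_take]
    exact List.prefix_iff_eq_take.1 hν
  rw [detok, foldl_flatten]
  congr 1
  rw [h, phi0_flatten]

end BPE
end

section
/- Single-merge boundary elimination: let r = (u, v) be a merge rule and φ any list of tokens. For every prefix μ of the list 𝕋_r(φ), there exists a (necessarily unique) prefix η of φ with π(η) = π(μ), and this η satisfies 𝕋_r(η) = μ. -/
/-!
Common BPE formalization preamble.

A token is a (nonempty) string over the alphabet `α`, modeled as `List α`.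
A merge rule is a pair of tokens; a dictionary is an ordered list of rules
(earlier rules have strictly higher priority).
-/

namespace BPE

variable {α : Type*} [DecidableEq α]

theorem exists_prefix_aux (r : Rule α) (φ : List (Token α)) :
    ∀ μ : List (Token α), μ <+: applyRule r φ →
      ∃ η, η <+: φ ∧ detok η = detok μ ∧ applyRule r η = μ := by
  induction φ using applyRule.induct (r := r) with
  | case1 =>
    intro μ h
    refine ⟨[], List.prefix_refl _, ?_, ?_⟩ <;> simp_all [applyRule]
  | case2 t =>
    intro μ h
    rw [applyRule] at h
    refine ⟨μ, h, rfl, ?_⟩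
    rcases μ with _ | ⟨a, μ'⟩
    · simp [applyRule]
    · rw [List.cons_prefix_cons] at h
      obtain ⟨rfl, h⟩ := h
      simp at h
      subst h
      simp [applyRule]
  | case3 t u rest hc ih =>
    intro μ h
    rw [applyRule, if_pos hc] at h
    rcases μ with _ | ⟨a, μ'⟩
    · exact ⟨[], List.nil_prefix, rfl, by simp [applyRule]⟩
    · rw [List.cons_prefix_cons] at h
      obtain ⟨rfl, h⟩ := h
      obtain ⟨η, h1, h2, h3⟩ := ih μ' h
      obtain ⟨rfl, rfl⟩ := hc
      refine ⟨r.1 :: r.2 :: η, by simpa [List.cons_prefix_cons] using h1, ?_, ?_⟩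
      · simp only [detok] at h2
        simp [detok, h2]
      · simp [applyRule, h3]
  | case4 t u rest hc ih =>
    intro μ h
    rw [applyRule, if_neg hc] at h
    rcases μ with _ | ⟨a, μ'⟩
    · exact ⟨[], List.nil_prefix, rfl, by simp [applyRule]⟩
    · rw [List.cons_prefix_cons] at h
      obtain ⟨rfl, h⟩ := h
      obtain ⟨η, h1, h2, h3⟩ := ih μ' h
      refine ⟨a :: η, by simpa [List.cons_prefix_cons] using h1, ?_, ?_⟩
      · simp only [detok] at h2
        simp [detok, h2]
      · rcases η with _ | ⟨b, η'⟩
        · rw [← h3]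
          simp [applyRule]
        · rw [List.cons_prefix_cons] at h1
          obtain ⟨rfl, h1⟩ := h1
          rw [applyRule, if_neg hc, h3]

theorem prefix_unique_aux (φ : List (List α)) (hφ : ∀ t ∈ φ, t ≠ []) :
    ∀ η η' : List (List α), η <+: φ → η' <+: φ → η'.flatten = η.flatten → η' = η := by
  induction φ with
  | nil =>
    intro η η' h h' _
    rw [List.prefix_nil] at h h'
    rw [h, h']
  | cons t φ ih =>
    intro η η' h h' e
    rcases η with _ | ⟨a, η⟩ <;> rcases η' with _ | ⟨b, η'⟩
    · rfl
    · rw [List.cons_prefix_cons] at h'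
      obtain ⟨rfl, h'⟩ := h'
      simp at e
      exact absurd e.1 (hφ b (by simp))
    · rw [List.cons_prefix_cons] at h
      obtain ⟨rfl, h⟩ := h
      simp at e
      exact absurd e.1 (hφ a (by simp))
    · rw [List.cons_prefix_cons] at h h'
      obtain ⟨rfl, h⟩ := h
      obtain ⟨rfl, h'⟩ := h'
      simp only [List.flatten_cons, List.append_cancel_left_eq] at e
      rw [ih (fun t ht => hφ t (by simp [ht])) η η' h h' e]

/-- **Single-merge boundary elimination.** For every prefix `μ` of `𝕋_r(φ)`,
there is a (necessarily unique) prefix `η` of `φ` with `π(η) = π(μ)`,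
and this `η` satisfies `𝕋_r(η) = μ`. -/
theorem single_merge_boundary_elimination [Fintype α] (r : Rule α)
    (hr1 : r.1 ≠ []) (hr2 : r.2 ≠ [])
    (φ : List (Token α)) (hφ : ∀ t ∈ φ, t ≠ [])
    (μ : List (Token α)) (hμ : μ <+: applyRule r φ) :
    ∃ η, η <+: φ ∧ detok η = detok μ ∧ applyRule r η = μ ∧
      ∀ η', η' <+: φ → detok η' = detok μ → η' = η := by
  obtain ⟨η, h1, h2, h3⟩ := exists_prefix_aux r φ μ hμ
  exact ⟨η, h1, h2, h3, fun η' h' e => prefix_unique_aux φ hφ η η' h1 h' (e.trans h2.symm)⟩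

end BPE
end

section
/- Well-definedness of the canonical rule: let t be a non-atomic canonical token. Then there exists exactly one index j with 1 ≤ j ≤ m such that the list φ_{j−1}(t) has length 2 and φ_j(t) = [t]; moreover, writing φ_{j−1}(t) = [x, y], the rule r_j equals the pair (x, y) and the concatenation xy equals t. -/
/-!
Common BPE formalization preamble.

A token is a (nonempty) string over the alphabet `α`, modeled as `List α`.
A merge rule is a pair of tokens; a dictionary is an ordered list of rules
(earlier rules have strictly higher priority).
-/

namespace BPE

variable {α : Type*} [DecidableEq α]

theorem applyRule_length_le (r : Rule α) (L : List (Token α)) :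
    L.length ≤ 2 * (applyRule r L).length := by
  fun_induction applyRule r L <;> simp_all <;> omega

theorem applyRule_short (r : Rule α) (L : List (Token α)) (h : L.length ≤ 1) :
    applyRule r L = L := by
  match L, h with
  | [], _ => simp [applyRule]
  | [_], _ => simp [applyRule]

theorem phiK_succ (D : Dict α) (k : ℕ) (s : List α) (hk : k < D.length) :
    phiK D (k + 1) s = applyRule D[k] (phiK D k s) := by
  unfold phiK
  rw [List.take_succ_eq_append_getElem hk, List.foldl_append]
  rfl

theorem phiK_persist (D : Dict α) (k d : ℕ) (s : List α) (h : (phiK D k s).length ≤ 1)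
    (hk : k + d ≤ D.length) : phiK D (k + d) s = phiK D k s := by
  induction d with
  | zero => rfl
  | succ d ih =>
    rw [← Nat.add_assoc, phiK_succ D (k + d) s (by omega), ih (by omega), applyRule_short _ _ h]

/-- **Well-definedness of the canonical rule.** For a non-atomic canonical token `t`,
there is exactly one (0-based) index `j` with `j < |D|`, `|φ_j(t)| = 2` and
`φ_{j+1}(t) = [t]`; moreover if `φ_j(t) = [x, y]` then the `j`-th rule of `D`
is exactly `(x, y)` and `x ++ y = t`. -/
theorem canonical_rule_well_defined [Fintype α] (D : Dict α) (hD : ValidDict D)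
    (t : Token α) (ht : 1 < t.length) (hc : IsCanonical D t) :
    (∃! j, IsCanonicalRuleIdx D t j) ∧
      ∀ j x y, j < D.length → phiK D j t = [x, y] → phiK D (j + 1) t = [t] →
        D[j]? = some (x, y) ∧ x ++ y = t := by
  have pers : ∀ k l, (phiK D k t).length ≤ 1 → k ≤ l → l ≤ D.length →
      phiK D l t = phiK D k t := by
    intro k l h hkl hl
    obtain ⟨d, rfl⟩ := Nat.exists_eq_add_of_le hkl
    exact phiK_persist D k d t h hl
  have hc' : phiK D D.length t = [t] := hc
  refine ⟨?_, ?_⟩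
  · have hex : ∃ k, (phiK D k t).length ≤ 1 := ⟨D.length, by simp [hc']⟩
    obtain ⟨k, hk1, hk2, hmin⟩ : ∃ k, (phiK D k t).length ≤ 1 ∧ k ≤ D.length ∧
        ∀ i < k, ¬ (phiK D i t).length ≤ 1 :=
      ⟨Nat.find hex, Nat.find_spec hex, Nat.find_min' hex (by simp [hc']),
        fun i hi => Nat.find_min hex hi⟩
    cases k with
    | zero => simp [phiK, phi0] at hk1; omega
    | succ j =>
      have h1 := hmin j (by omega)
      have h2 := applyRule_length_le D[j] (phiK D j t)
      rw [← phiK_succ D j t hk2] at h2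
      refine ⟨j, ⟨hk2, by omega, ?_⟩, ?_⟩
      · rw [← pers _ _ hk1 hk2 le_rfl, hc']
      · rintro i ⟨hi, hi2, hi3⟩
        rcases lt_trichotomy i j with h | h | h
        · have := hmin (i + 1) (by omega)
          simp [hi3] at this
        · exact h
        · have := pers (j + 1) i hk1 h hi.le
          rw [this] at hi2
          omega
  · intro j x y hj hxy ht1
    rw [phiK_succ D j t hj, hxy] at ht1
    simp only [applyRule] at ht1
    split_ifs at ht1 with h
    · obtain ⟨rfl, rfl⟩ := h
      simp at ht1
      simp [hj, ht1]
    · simp at ht1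


end BPE
end

section
/- Canonical closure under decomposition: let t be a non-atomic canonical token and suppose that for some index j, φ_{j−1}(t) = [x, y] and φ_j(t) = [t]. Then both components are canonical: 𝕋_D(x) = [x] and 𝕋_D(y) = [y]. -/
/-!
Common BPE formalization preamble.

A token is a (nonempty) string over the alphabet `α`, modeled as `List α`.
A merge rule is a pair of tokens; a dictionary is an ordered list of rules
(earlier rules have strictly higher priority).
-/

namespace BPE

variable {α : Type*} [DecidableEq α]

theorem applyRule_split (r : Rule α) (L : List (Token α)) :
    ∀ A B, applyRule r L = A ++ B →
      ∃ L1 L2, L = L1 ++ L2 ∧ applyRule r L1 = A ∧ applyRule r L2 = B := by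
  induction L using applyRule.induct r with
  | case1 =>
    intro A B h
    have hh : A = [] ∧ B = [] := by simpa [applyRule] using h
    exact ⟨[], [], by simp, by simp [applyRule, hh.1], by simp [applyRule, hh.2]⟩
  | case2 t =>
    intro A B h
    cases A with
    | nil => exact ⟨[], [t], by simp, by simp [applyRule], by simpa using h⟩
    | cons a A =>
      have hh : t = a ∧ A = [] ∧ B = [] := by simpa [applyRule] using h
      obtain ⟨rfl, rfl, rfl⟩ := hh
      exact ⟨[t], [], by simp, by simp [applyRule], by simp [applyRule]⟩
  | case3 t u rest hm ih =>
    intro A B h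
    cases A with
    | nil => exact ⟨[], t :: u :: rest, by simp, by simp [applyRule], by simpa using h⟩
    | cons a A =>
      rw [applyRule, if_pos hm, List.cons_append, List.cons.injEq] at h
      obtain ⟨L1, L2, e, h1, h2⟩ := ih A B h.2
      refine ⟨t :: u :: L1, L2, by simp [e], ?_, h2⟩
      rw [applyRule, if_pos hm, h1, h.1]
  | case4 t u rest hm ih =>
    intro A B h
    cases A with
    | nil => exact ⟨[], t :: u :: rest, by simp, by simp [applyRule], by simpa using h⟩
    | cons a A =>
      rw [applyRule, if_neg hm, List.cons_append, List.cons.injEq] at h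
      obtain ⟨L1, L2, e, h1, h2⟩ := ih A B h.2
      refine ⟨t :: L1, L2, by simp [e], ?_, h2⟩
      cases L1 with
      | nil =>
        have h3 : A = [] := by simpa [applyRule] using h1.symm
        simp [applyRule, h3, h.1]
      | cons v L1 =>
        have h3 : u = v := by
          rw [List.cons_append, List.cons.injEq] at e
          exact e.1
        subst h3
        rw [applyRule, if_neg hm, h1, h.1]

theorem fold_split (D : Dict α) : ∀ (L A B : List (Token α)),
    D.foldl (fun φ r => applyRule r φ) L = A ++ B →
      ∃ L1 L2, L = L1 ++ L2 ∧ D.foldl (fun φ r => applyRule r φ) L1 = A ∧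
        D.foldl (fun φ r => applyRule r φ) L2 = B := by
  induction D with
  | nil => intro L A B h; exact ⟨A, B, h, rfl, rfl⟩
  | cons r D ih =>
    intro L A B h
    obtain ⟨M1, M2, e, h1, h2⟩ := ih _ A B h
    obtain ⟨L1, L2, ee, k1, k2⟩ := applyRule_split r L M1 M2 e
    exact ⟨L1, L2, ee, by simpa [k1] using h1, by simpa [k2] using h2⟩

theorem fold_flatten (D : Dict α) : ∀ L : List (Token α),
    (D.foldl (fun φ r => applyRule r φ) L).flatten = L.flatten := by
  induction D with
  | nil => intro L; rfl
  | cons r D ih => intro L; rw [List.foldl_cons, ih, applyRule_flatten]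

theorem fold_single (D : Dict α) (x : Token α) :
    D.foldl (fun φ r => applyRule r φ) [x] = [x] := by
  induction D with
  | nil => rfl
  | cons r D ih => rw [List.foldl_cons, applyRule, ih]

theorem canon_of_fold (D : Dict α) (j : ℕ) (s x : Token α)
    (h : (D.take j).foldl (fun φ r => applyRule r φ) (phi0 s) = [x]) :
    tokenize D x = [x] := by
  have hs : s = x := by
    have := fold_flatten (D.take j) (phi0 s)
    rw [h, phi0_flatten] at this
    simpa using this.symm
  subst hs
  unfold tokenize phiK
  rw [List.take_length]
  conv_lhs => rw [← List.take_append_drop j D]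
  rw [List.foldl_append, h, fold_single]

/-- **Canonical closure under decomposition.** If `t` is a non-atomic canonical token
with `φ_{j-1}(t) = [x, y]` and `φ_j(t) = [t]`, then `x` and `y` are canonical. -/
theorem canonical_closure [Fintype α] (D : Dict α) (hD : ValidDict D)
    (t : Token α) (ht : 1 < t.length) (hc : IsCanonical D t)
    (j : ℕ) (x y : Token α)
    (h1 : phiK D j t = [x, y]) (h2 : phiK D (j + 1) t = [t]) :
    tokenize D x = [x] ∧ tokenize D y = [y] := by
  obtain ⟨L1, L2, e, hx, hy⟩ := fold_split (D.take j) (phi0 t) [x] [y] h1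
  obtain ⟨s1, s2, _, e1, e2⟩ := List.map_eq_append_iff.1 e
  subst e1 e2
  exact ⟨canon_of_fold D j s1 x hx, canon_of_fold D j s2 y hy⟩

end BPE
end
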